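/- Let w(λ,x) be a nonnegative weight function that is totally positive of order 2, and let f : [0,∞) → [0,∞) be non-decreasing and Borel-measurable. Let X be a nonnegative random variable with probability density g such that, for each λ > 0, 0 < E[w(λ,X)] < ∞ and E[w(λ,X)f(X)] < ∞. Then the function λ ↦ H[λ,f(X)] is non-decreasing on (0,∞): for all λ₁ > λ₂ > 0, H[λ₁,f(X)] ≥ H[λ₂,f(X)]. -/

import Mathlib

open MeasureTheory

/-!
Write `u = w(λ₁, ·)`, `v = w(λ₂, ·)` with `λ₁ > λ₂`. After clearing denominators the claim is that
the 2 × 2 determinant `E[u f] E[v] - E[u] E[v f]` is nonnegative. By Andréief's identity, the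
continuous form of Cauchy–Binet, twice this determinant is the double integral of
`(f x - f y) (u x v y - u y v x)`, whose two factors have the same sign: the first because `f` is
monotone, the second because `w` is TP₂.
-/

section Andreief

variable {α 𝕜 : Type*} [MeasurableSpace α] [RCLike 𝕜] {μ : Measure α}

theorem integral_integral_det_mul_det {u v φ ψ : α → 𝕜}
    (huφ : Integrable (fun x => u x * φ x) μ) (huψ : Integrable (fun x => u x * ψ x) μ)
    (hvφ : Integrable (fun x => v x * φ x) μ) (hvψ : Integrable (fun x => v x * ψ x) μ) :
    ∫ x, ∫ y, (φ x * ψ y - φ y * ψ x) * (u x * v y - u y * v x) ∂μ ∂μ =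
      2 * ((∫ x, u x * φ x ∂μ) * (∫ x, v x * ψ x ∂μ) -
        (∫ x, u x * ψ x ∂μ) * ∫ x, v x * φ x ∂μ) := by
  have integral_linear_combination (a b c d : 𝕜) :
      ∫ y, ((a * (v y * ψ y) - b * (u y * ψ y)) - (c * (v y * φ y) - d * (u y * φ y))) ∂μ =
        (a * (∫ y, v y * ψ y ∂μ) - b * ∫ y, u y * ψ y ∂μ) -
          (c * (∫ y, v y * φ y ∂μ) - d * ∫ y, u y * φ y ∂μ) := by
    rw [integral_sub (by fun_prop) (by fun_prop), integral_sub (by fun_prop) (by fun_prop),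
      integral_sub (by fun_prop) (by fun_prop)]
    simp only [integral_const_mul]
  set Uφ := ∫ x, u x * φ x ∂μ
  set Uψ := ∫ x, u x * ψ x ∂μ
  set Vφ := ∫ x, v x * φ x ∂μ
  set Vψ := ∫ x, v x * ψ x ∂μ
  calc ∫ x, ∫ y, (φ x * ψ y - φ y * ψ x) * (u x * v y - u y * v x) ∂μ ∂μ
    _ = ∫ x, ∫ y, ((u x * φ x * (v y * ψ y) - v x * φ x * (u y * ψ y)) -
          (u x * ψ x * (v y * φ y) - v x * ψ x * (u y * φ y))) ∂μ ∂μ := by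
      congr with x; congr with y; ring
    _ = ∫ x, ((u x * φ x * Vψ - v x * φ x * Uψ) - (u x * ψ x * Vφ - v x * ψ x * Uφ)) ∂μ := by
      simp only [integral_linear_combination]
    _ = ∫ x, ((Uφ * (v x * ψ x) - Vφ * (u x * ψ x)) -
          (Uψ * (v x * φ x) - Vψ * (u x * φ x))) ∂μ := by
      congr with x; ring
    _ = 2 * (Uφ * Vψ - Uψ * Vφ) := by
      rw [integral_linear_combination]; ring

end Andreief

/-- Total positivity of order 2 of the kernel `w` on `T × s`, with the 2 × 2 minors written as an
inequality between products. The signs of the entries of `w` are not part of the notion. -/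
def IsTP2On {ι α : Type*} [LT ι] [LT α] (w : ι → α → ℝ) (T : Set ι) (s : Set α) : Prop :=
  ∀ ⦃i⦄, i ∈ T → ∀ ⦃j⦄, j ∈ T → i < j → ∀ ⦃x⦄, x ∈ s → ∀ ⦃y⦄, y ∈ s → x < y →
    w j x * w i y ≤ w j y * w i x

/-- The weighted premium `H[h(X)] = E[w(X) h(X)] / E[w(X)]` of a random variable `X` with density
`g` with respect to `μ`, with the junk value `0` when `E[w(X)] = 0`. Normalizing `g` would not
change the quotient. -/
noncomputable def weightedPremium {α : Type*} [MeasurableSpace α] (μ : Measure α)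
    (g w h : α → ℝ) : ℝ :=
  (∫ x, w x * h x * g x ∂μ) / ∫ x, w x * g x ∂μ

namespace IsTP2On

variable {ι α : Type*} {w : ι → α → ℝ} {T : Set ι} {s : Set α} {f : α → ℝ} {i j : ι}

theorem mul_right [LT ι] [LT α] (hw : IsTP2On w T s) {g : α → ℝ} (hg : ∀ x ∈ s, 0 ≤ g x) :
    IsTP2On (fun i x => w i x * g x) T s := by
  intro i hi j hj hij x hx y hy hxy
  calc w j x * g x * (w i y * g y)
    _ = w j x * w i y * (g x * g y) := by ring
    _ ≤ w j y * w i x * (g x * g y) :=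
      mul_le_mul_of_nonneg_right (hw hi hj hij hx hy hxy) (mul_nonneg (hg x hx) (hg y hy))
    _ = w j y * g y * (w i x * g x) := by ring

theorem sub_mul_det_nonneg [LT ι] [LinearOrder α] (hw : IsTP2On w T s) (hf : MonotoneOn f s)
    (hi : i ∈ T) (hj : j ∈ T) (hij : i < j) {x y : α} (hx : x ∈ s) (hy : y ∈ s) :
    0 ≤ (f x - f y) * (w j x * w i y - w j y * w i x) := by
  rcases lt_trichotomy x y with hxy | rfl | hyx
  · exact mul_nonneg_of_nonpos_of_nonpos (sub_nonpos.2 (hf hx hy hxy.le))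
      (sub_nonpos.2 (hw hi hj hij hx hy hxy))
  · simp
  · exact mul_nonneg (sub_nonneg.2 (hf hy hx hyx.le)) (sub_nonneg.2 (hw hi hj hij hy hx hyx))

theorem integral_mul_mul_integral_le [LT ι] [LinearOrder α] [MeasurableSpace α] {μ : Measure α}
    (hw : IsTP2On w T s) (hf : MonotoneOn f s) (hs : ∀ᵐ x ∂μ, x ∈ s)
    (hi : i ∈ T) (hj : j ∈ T) (hij : i < j)
    (hwi : Integrable (w i) μ) (hwfi : Integrable (fun x => w i x * f x) μ)
    (hwj : Integrable (w j) μ) (hwfj : Integrable (fun x => w j x * f x) μ) :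
    (∫ x, w i x * f x ∂μ) * (∫ x, w j x ∂μ) ≤ (∫ x, w j x * f x ∂μ) * ∫ x, w i x ∂μ := by
  have double_integral_nonneg :
      0 ≤ ∫ x, ∫ y, (f x - f y) * (w j x * w i y - w j y * w i x) ∂μ ∂μ := by
    refine integral_nonneg_of_ae ?_
    filter_upwards [hs] with x hx
    refine integral_nonneg_of_ae ?_
    filter_upwards [hs] with y hy
    exact hw.sub_mul_det_nonneg hf hi hj hij hx hy
  have andreief := integral_integral_det_mul_det (ψ := fun _ => (1 : ℝ))
    hwfj (by simpa using hwj) hwfi (by simpa using hwi)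
  simp only [mul_one] at andreief
  linarith

end IsTP2On

theorem stmt_3_general {ι α : Type*} [PartialOrder ι] [LinearOrder α] [MeasurableSpace α]
    {μ : Measure α} {w : ι → α → ℝ} {T : Set ι} {s : Set α} {f g : α → ℝ}
    (hw : IsTP2On w T s) (hf : MonotoneOn f s) (hg : ∀ x ∈ s, 0 ≤ g x) (hs : ∀ᵐ x ∂μ, x ∈ s)
    (hwint : ∀ i ∈ T, Integrable (fun x => w i x * g x) μ)
    (hwfint : ∀ i ∈ T, Integrable (fun x => w i x * f x * g x) μ)
    (hwpos : ∀ i ∈ T, 0 < ∫ x, w i x * g x ∂μ) :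
    MonotoneOn (fun i => weightedPremium μ g (w i) f) T := by
  intro i hi j hj hij
  rcases hij.eq_or_lt with rfl | hij
  · exact le_rfl
  · refine (div_le_div_iff₀ (hwpos i hi) (hwpos j hj)).2 ?_
    simp only [mul_right_comm _ (f _) (g _)] at hwfint ⊢
    exact (hw.mul_right hg).integral_mul_mul_integral_le hf hs hi hj hij
      (hwint i hi) (hwfint i hi) (hwint j hj) (hwfint j hj)

/-- **loading monotonicity.** If `w` is TP₂ and `f : [0,∞) → [0,∞)` is
non-decreasing and Borel measurable, with the relevant expectations finite and positive
denominators for each `λ > 0`, then `λ ↦ H[λ, f(X)]` is non-decreasing on `(0,∞)`. -/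
theorem stmt_3
    (w : ℝ → ℝ → ℝ) (hw_nonneg : ∀ l x : ℝ, 0 ≤ w l x)
    (hTP2 : ∀ l1 l2 x1 x2 : ℝ, l2 < l1 → x2 < x1 →
      0 ≤ w l1 x1 * w l2 x2 - w l1 x2 * w l2 x1)
    (f : ℝ → ℝ) (hf_nonneg : ∀ x : ℝ, 0 ≤ x → 0 ≤ f x)
    (hf_mono : ∀ x y : ℝ, 0 ≤ x → x ≤ y → f x ≤ f y)
    (hf_meas : Measurable f)
    (g : ℝ → ℝ) (hg_nonneg : ∀ x : ℝ, 0 ≤ g x) (hg_meas : Measurable g)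
    (hg_prob : ∫ x in Set.Ici (0:ℝ), g x = 1)
    (hInt : ∀ l : ℝ, 0 < l →
      IntegrableOn (fun x => w l x * g x) (Set.Ici 0) ∧
      IntegrableOn (fun x => w l x * f x * g x) (Set.Ici 0) ∧
      0 < ∫ x in Set.Ici (0:ℝ), w l x * g x) :
    ∀ l1 l2 : ℝ, 0 < l2 → l2 < l1 →
      (∫ x in Set.Ici (0:ℝ), w l2 x * f x * g x) / (∫ x in Set.Ici (0:ℝ), w l2 x * g x) ≤
      (∫ x in Set.Ici (0:ℝ), w l1 x * f x * g x) / (∫ x in Set.Ici (0:ℝ), w l1 x * g x) := by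
  have hw : IsTP2On w (Set.Ioi 0) (Set.Ici 0) := fun l _ l' _ hll' x _ y _ hxy =>
    sub_nonneg.1 (hTP2 l' l y x hll' hxy)
  exact fun l1 l2 hl2 hl => stmt_3_general hw (fun x hx y _ => hf_mono x y hx)
    (fun x _ => hg_nonneg x) (ae_restrict_mem measurableSet_Ici) (fun l hl => (hInt l hl).1)
    (fun l hl => (hInt l hl).2.1) (fun l hl => (hInt l hl).2.2) hl2 (hl2.trans hl) hl.le
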